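/- arXiv:2108.11491 — 2 statements merged into one kernel-verified Lean document; each statement's English description precedes it below -/
import Mathlib

section
/- Let E be a real normed space, and let φ, ψ : E → E be smooth maps (ContDiff ℝ ⊤) with ψ ∘ φ = id and φ ∘ ψ = id. Let S ⊆ E satisfy φ '' S = S, and let x ∈ S. Then the image of the formal tangent space under the derivative of φ satisfies Submodule.map (fderiv ℝ φ x) (𝒯ₓS) = 𝒯_{φ x}S; in particular fderiv ℝ φ x carries 𝒯ₓS isomorphically onto 𝒯_{φ x}S. -/
/-- The formal tangent space of a subset `S` of a real normed space at a point `x`: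
the span of all derivatives at `0` of smooth curves through `x` lying in `S`. -/
def formalTangent {E : Type*} [NormedAddCommGroup E] [NormedSpace ℝ E]
    (S : Set E) (x : E) : Submodule ℝ E :=
  Submodule.span ℝ
    {v : E | ∃ γ : ℝ → E, ContDiff ℝ (⊤ : ℕ∞) γ ∧ γ 0 = x ∧ Set.range γ ⊆ S ∧ deriv γ 0 = v}

open Set
open scoped ContDiff

section

variable {E F : Type*} [NormedAddCommGroup E] [NormedSpace ℝ E]
  [NormedAddCommGroup F] [NormedSpace ℝ F] {S : Set E} {T : Set F} {x : E} {y : F}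
  {φ : E → F} {ψ : F → E} {φ' : E →L[ℝ] F}

theorem deriv_mem_formalTangent {γ : ℝ → E} (hγ : ContDiff ℝ ∞ γ) (hγx : γ 0 = x)
    (hγS : ∀ t, γ t ∈ S) : deriv γ 0 ∈ formalTangent S x :=
  Submodule.subset_span ⟨γ, hγ, hγx, range_subset_iff.2 hγS, rfl⟩

theorem formalTangent_le_of_forall_deriv_mem {p : Submodule ℝ E}
    (h : ∀ γ : ℝ → E, ContDiff ℝ ∞ γ → γ 0 = x → (∀ t, γ t ∈ S) → deriv γ 0 ∈ p) :
    formalTangent S x ≤ p := by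
  refine Submodule.span_le.2 ?_
  rintro _ ⟨γ, hγ, hγx, hγS, rfl⟩
  exact h γ hγ hγx (range_subset_iff.1 hγS)

theorem map_formalTangent_le (hφ : ContDiffOn ℝ ∞ φ S) (hφ' : HasFDerivWithinAt φ φ' S x)
    (hST : MapsTo φ S T) :
    (formalTangent S x).map (φ' : E →ₗ[ℝ] F) ≤ formalTangent T (φ x) := by
  refine Submodule.map_le_iff_le_comap.2 (formalTangent_le_of_forall_deriv_mem ?_)
  rintro γ hγ rfl hγS
  have hderiv : deriv (φ ∘ γ) 0 = φ' (deriv γ 0) :=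
    (hφ'.comp_hasDerivAt 0 (hγ.differentiable (by simp) 0).hasDerivAt (.of_forall hγS)).deriv
  rw [Submodule.mem_comap, ContinuousLinearMap.coe_coe, ← hderiv]
  exact deriv_mem_formalTangent (hφ.comp_contDiff hγ hγS) rfl fun t => hST (hγS t)

-- A smooth curve `γ` in `T` is the image under `φ` of the smooth curve `ψ ∘ γ` in `S`.
theorem formalTangent_le_map (hφ' : HasFDerivWithinAt φ φ' S (ψ y)) (hψ : ContDiffOn ℝ ∞ ψ T)
    (hTS : MapsTo ψ T S) (hφψ : LeftInvOn φ ψ T) :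
    formalTangent T y ≤ (formalTangent S (ψ y)).map (φ' : E →ₗ[ℝ] F) := by
  refine formalTangent_le_of_forall_deriv_mem ?_
  rintro γ hγ rfl hγT
  have hψγ : ContDiff ℝ ∞ (ψ ∘ γ) := hψ.comp_contDiff hγ hγT
  have hψγS : ∀ t, (ψ ∘ γ) t ∈ S := fun t => hTS (hγT t)
  have hlift : φ ∘ (ψ ∘ γ) = γ := funext fun t => hφψ (hγT t)
  have hderiv : deriv (φ ∘ (ψ ∘ γ)) 0 = φ' (deriv (ψ ∘ γ) 0) :=
    (hφ'.comp_hasDerivAt 0 (hψγ.differentiable (by simp) 0).hasDerivAt (.of_forall hψγS)).deriv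
  rw [hlift] at hderiv
  rw [hderiv]
  exact Submodule.mem_map_of_mem (deriv_mem_formalTangent hψγ rfl hψγS)

theorem stmt2_general (hφ : ContDiffOn ℝ ∞ φ S) (hψ : ContDiffOn ℝ ∞ ψ (φ '' S))
    (hψφ : LeftInvOn ψ φ S) (hx : x ∈ S) (hφ' : HasFDerivWithinAt φ φ' S x) :
    (formalTangent S x).map (φ' : E →ₗ[ℝ] F) = formalTangent (φ '' S) (φ x) := by
  refine (map_formalTangent_le hφ hφ' (mapsTo_image φ S)).antisymm ?_
  have hψS : MapsTo ψ (φ '' S) S := hψφ.mapsTo (surjOn_image φ S)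
  have hφψ : LeftInvOn φ ψ (φ '' S) := hψφ.rightInvOn_image
  have hψx : ψ (φ x) = x := hψφ hx
  rw [← hψx] at hφ'
  simpa only [hψx] using formalTangent_le_map hφ' hψ hψS hφψ

end

theorem stmt2 {E : Type*} [NormedAddCommGroup E] [NormedSpace ℝ E]
    (φ ψ : E → E) (hφ : ContDiff ℝ (⊤ : ℕ∞) φ) (hψ : ContDiff ℝ (⊤ : ℕ∞) ψ)
    (hψφ : ψ ∘ φ = id) (hφψ : φ ∘ ψ = id)
    (S : Set E) (hS : φ '' S = S) (x : E) (hx : x ∈ S) :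
    Submodule.map (fderiv ℝ φ x : E →ₗ[ℝ] E) (formalTangent S x) = formalTangent S (φ x) := by
  have hφ' : HasFDerivAt φ (fderiv ℝ φ x) x := (hφ.differentiable (by simp) x).hasFDerivAt
  simpa only [hS] using stmt2_general hφ.contDiffOn hψ.contDiffOn
    (fun y _ => congrFun hψφ y) hx hφ'.hasFDerivWithinAt
end

section
/- Let c : Fin n → Fin n → Fin n → ℝ be the structure constants of a real Lie algebra, i.e. c i j k = -(c j i k) for all i, j, k, and ∑ m, (c i j m * c m k l + c j k m * c m i l + c k i m * c m j l) = 0 for all i, j, k, l, and let π be the associated Lie–Poisson bivector field on ℝⁿ, π x i j = ∑ k, c i j k * x k. Then π is linearizable around the diagonal — meaning there exist open sets W₁, W₂ ⊆ (Fin n → ℝ) × (Fin n → ℝ) with (x,0) ∈ W₁ for all x, and smooth maps φ, ψ with ψ ∘ φ = id on W₁, φ ∘ ψ = id on W₂, φ '' W₁ = W₂, φ (x,0) = (x,x) for all x, and J p * πlin p * (J p)ᵀ = Π (φ p) for all p ∈ W₁ — if and only if c i j k = 0 for all i, j, k (i.e. the Lie algebra is abelian). -/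
open scoped Matrix

/-- The Lie–Poisson bivector field on `ℝⁿ` associated to structure constants `c`. -/
noncomputable def liePoisson {n : ℕ} (c : Fin n → Fin n → Fin n → ℝ)
    (x : Fin n → ℝ) : Matrix (Fin n) (Fin n) ℝ :=
  Matrix.of fun i j => ∑ k, c i j k * x k

/-- The linearization of a bivector field `π` on `ℝⁿ` around the diagonal:
a bivector field on `ℝⁿ × ℝⁿ`, indexed by `Fin n ⊕ Fin n`. -/
noncomputable def pilin {n : ℕ} (π : (Fin n → ℝ) → Matrix (Fin n) (Fin n) ℝ)
    (p : (Fin n → ℝ) × (Fin n → ℝ)) : Matrix (Fin n ⊕ Fin n) (Fin n ⊕ Fin n) ℝ :=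
  Matrix.fromBlocks 0 (π p.1) (-(π p.1)ᵀ)
    (Matrix.of fun i j => fderiv ℝ (fun z => π z i j) p.1 p.2)

/-- The product Poisson structure `π × (-π)` on `ℝⁿ × ℝⁿ`. -/
noncomputable def Pprod {n : ℕ} (π : (Fin n → ℝ) → Matrix (Fin n) (Fin n) ℝ)
    (p : (Fin n → ℝ) × (Fin n → ℝ)) : Matrix (Fin n ⊕ Fin n) (Fin n ⊕ Fin n) ℝ :=
  Matrix.fromBlocks (π p.1) 0 0 (-(π p.2))

/-- The standard basis vector of `(Fin n → ℝ) × (Fin n → ℝ)` indexed by `Fin n ⊕ Fin n`. -/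
noncomputable def basisVec {n : ℕ} (l : Fin n ⊕ Fin n) : (Fin n → ℝ) × (Fin n → ℝ) :=
  Sum.elim (fun i => (Pi.single i 1, 0)) (fun i => (0, Pi.single i 1)) l

/-- The Jacobian matrix of a map `φ : ℝⁿ × ℝⁿ → ℝⁿ × ℝⁿ` at `p`, under the identification
`(Fin n → ℝ) × (Fin n → ℝ) ≅ (Fin n ⊕ Fin n → ℝ)`. -/
noncomputable def Jmat {n : ℕ}
    (φ : (Fin n → ℝ) × (Fin n → ℝ) → (Fin n → ℝ) × (Fin n → ℝ))
    (p : (Fin n → ℝ) × (Fin n → ℝ)) : Matrix (Fin n ⊕ Fin n) (Fin n ⊕ Fin n) ℝ :=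
  Matrix.of fun l m =>
    Sum.elim (fun i => (fderiv ℝ φ p (basisVec m)).1 i)
      (fun i => (fderiv ℝ φ p (basisVec m)).2 i) l

/-!
Suppose `π` is linearizable around the diagonal by `φ`, and `π x = 0`. Then both `pilin π` and
`Pprod π ∘ φ` vanish at `(x, 0)`, so to first order there the equation
`J * pilin π * Jᵀ = Pprod π ∘ φ` says that the constant matrix `J₀ = Jmat φ (x, 0)` relates their
linear parts. As `φ` maps the zero section to the diagonal, `J₀` has blocks `[1, B; 1, D]`. Writing
`P = dπ(x) v`, the equation in the directions `(v, 0)` and `(0, v)` gives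

* `P * Bᵀ - B * Pᵀ = P`, so that `P` is skew and `B * P + P * Bᵀ = P`;
* `P * Dᵀ + B * P = 0` and `B * P * Dᵀ = 0`, so that `B * B * P = 0`.

This forces `P = 0`: the linear part of `π` vanishes at every zero of `π`. A Lie–Poisson structure
vanishes at the origin and is its own linear part there.
-/

section Algebra

-- Left multiplication `L` by `b` and right multiplication `R` by `b'` commute, so `L² p = R² p = 0`
-- gives `p = (L + R)³ p = 0`.
theorem eq_zero_of_mul_add_mul_eq_self {R : Type*} [NonUnitalSemiring R] {b b' p : R}
    (hfix : b * p + p * b' = p) (hleft : b * (b * p) = 0) (hright : p * b' * b' = 0) :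
    p = 0 := by
  have hbp : b * (p * b') = b * p := by
    simpa only [mul_add, hleft, zero_add] using congrArg (b * ·) hfix
  have hpb : b * (p * b') = p * b' := by
    simpa only [add_mul, hright, add_zero, mul_assoc] using congrArg (· * b') hfix
  have hbp_zero : b * p = 0 := by
    rw [← hfix, ← hpb, hbp, mul_add, hleft, add_zero]
  rw [← hfix, ← hpb, hbp, hbp_zero, add_zero]

open Matrix in
theorem eq_zero_of_fromBlocks_congruence {m R : Type*} [Fintype m] [DecidableEq m] [CommRing R]
    {B D P Q S : Matrix m m R}
    (hbase : fromBlocks 1 B 1 D * fromBlocks 0 P (-Pᵀ) 0 * (fromBlocks 1 B 1 D)ᵀ =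
      fromBlocks P 0 0 (-P))
    (hfibre : fromBlocks 1 B 1 D * fromBlocks 0 0 0 P * (fromBlocks 1 B 1 D)ᵀ =
      fromBlocks Q 0 0 S) :
    P = 0 := by
  simp only [fromBlocks_transpose, fromBlocks_multiply, fromBlocks_inj, transpose_one,
    Matrix.mul_zero, Matrix.one_mul, Matrix.mul_one, zero_add, add_zero, Matrix.mul_neg]
    at hbase hfibre
  obtain ⟨hP, hPD, -, -⟩ := hbase
  obtain ⟨-, hBPD, -, -⟩ := hfibre
  have hskew : Pᵀ = -P := by
    rw [← hP]
    simp only [transpose_add, transpose_neg, transpose_mul, transpose_transpose]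
    abel
  rw [hskew, Matrix.mul_neg, neg_neg] at hP hPD
  have hleft : B * (B * P) = 0 := by
    simpa only [Matrix.mul_add, ← Matrix.mul_assoc, hBPD, add_zero, Matrix.mul_zero] using
      congrArg (B * ·) hPD
  have hright : P * Bᵀ * Bᵀ = 0 := by
    simpa only [transpose_mul, hskew, Matrix.neg_mul, neg_eq_zero, transpose_zero] using
      congrArg transpose hleft
  exact eq_zero_of_mul_add_mul_eq_self hP hleft hright

end Algebra

open Filter Topology

theorem tendsto_fromBlocks {α l m n o R : Type*} [TopologicalSpace R] {f : Filter α}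
    {A : α → Matrix n l R} {B : α → Matrix n m R} {C : α → Matrix o l R} {D : α → Matrix o m R}
    {A₀ : Matrix n l R} {B₀ : Matrix n m R} {C₀ : Matrix o l R} {D₀ : Matrix o m R}
    (hA : Tendsto A f (𝓝 A₀)) (hB : Tendsto B f (𝓝 B₀)) (hC : Tendsto C f (𝓝 C₀))
    (hD : Tendsto D f (𝓝 D₀)) :
    Tendsto (fun a => Matrix.fromBlocks (A a) (B a) (C a) (D a)) f
      (𝓝 (Matrix.fromBlocks A₀ B₀ C₀ D₀)) := by
  have hcont : Continuous fun M : (Matrix n l R × Matrix n m R) × Matrix o l R × Matrix o m R =>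
      Matrix.fromBlocks M.1.1 M.1.2 M.2.1 M.2.2 := by
    fun_prop
  exact (hcont.tendsto ((A₀, B₀), C₀, D₀)).comp
    ((hA.prodMk_nhds hB).prodMk_nhds (hC.prodMk_nhds hD))

theorem tendsto_transpose {α m n R : Type*} [TopologicalSpace R] {f : Filter α}
    {A : α → Matrix m n R} {A₀ : Matrix m n R} (hA : Tendsto A f (𝓝 A₀)) :
    Tendsto (fun a => (A a)ᵀ) f (𝓝 A₀ᵀ) :=
  (continuous_id.matrix_transpose.tendsto A₀).comp hA

section Calculus

variable {𝕜 E : Type*} [NontriviallyNormedField 𝕜] [NormedAddCommGroup E] [NormedSpace 𝕜 E]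

theorem hasDerivAt_add_smul (x v : E) (t : 𝕜) : HasDerivAt (fun s : 𝕜 => x + s • v) v t := by
  simpa only [id_eq, one_smul] using ((hasDerivAt_id t).smul_const v).const_add x

theorem fderiv_apply_of_eq_diagonal {φ : E × E → E × E} {x : E}
    (hφ : DifferentiableAt 𝕜 φ (x, 0)) (hdiag : ∀ᶠ y in 𝓝 x, φ (y, 0) = (y, y)) (v : E) :
    fderiv 𝕜 φ (x, 0) (v, 0) = (v, v) := by
  have hcomp : HasFDerivAt (fun y => φ (y, 0)) ((fderiv 𝕜 φ (x, 0)).comp (.inl 𝕜 E E)) x :=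
    HasFDerivAt.comp x hφ.hasFDerivAt (hasFDerivAt_prodMk_left x 0)
  have hid : HasFDerivAt (fun y => φ (y, 0)) ((ContinuousLinearMap.id 𝕜 E).prod (.id 𝕜 E)) x :=
    ((hasFDerivAt_id x).prodMk (hasFDerivAt_id x)).congr_of_eventuallyEq hdiag
  simpa using DFunLike.congr_fun (hcomp.unique hid) v

end Calculus

/-- The linear part `v ↦ dπ(x) v` of the matrix field `π` at `x`. It is formed entrywise, like the
lower right block of `pilin`, since matrices carry no canonical norm. -/
noncomputable def linearPart {n : ℕ} (π : (Fin n → ℝ) → Matrix (Fin n) (Fin n) ℝ)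
    (x v : Fin n → ℝ) : Matrix (Fin n) (Fin n) ℝ :=
  Matrix.of fun i j => fderiv ℝ (fun z => π z i j) x v

/-- The matrix field `π` is linearizable around the diagonal: a diffeomorphism from a neighbourhood
of the zero section onto a neighbourhood of the diagonal carries the zero section identically onto
the diagonal and the linearization `pilin π` to the product structure `Pprod π`. The diffeomorphism
`W₁ → W₂` and its inverse are restrictions of globally defined smooth maps `φ` and `ψ`. -/
def IsLinearizableAroundDiagonal {n : ℕ} (π : (Fin n → ℝ) → Matrix (Fin n) (Fin n) ℝ) :
    Prop :=
  ∃ W₁ W₂ : Set ((Fin n → ℝ) × (Fin n → ℝ)),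
    IsOpen W₁ ∧ IsOpen W₂ ∧ (∀ x : Fin n → ℝ, (x, (0 : Fin n → ℝ)) ∈ W₁) ∧
    ∃ φ ψ : (Fin n → ℝ) × (Fin n → ℝ) → (Fin n → ℝ) × (Fin n → ℝ),
      ContDiff ℝ (⊤ : ℕ∞) φ ∧ ContDiff ℝ (⊤ : ℕ∞) ψ ∧
      (∀ p ∈ W₁, ψ (φ p) = p) ∧ (∀ p ∈ W₂, φ (ψ p) = p) ∧
      φ '' W₁ = W₂ ∧ (∀ x : Fin n → ℝ, φ (x, 0) = (x, x)) ∧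
      (∀ p ∈ W₁, Jmat φ p * pilin π p * (Jmat φ p)ᵀ = Pprod π (φ p))

section LinearPart

variable {n : ℕ} {π : (Fin n → ℝ) → Matrix (Fin n) (Fin n) ℝ} {x : Fin n → ℝ}

theorem linearPart_zero_right : linearPart π x 0 = 0 := by
  ext i j
  simp [linearPart]

theorem tendsto_inv_smul_comp (hπ : ∀ i j, DifferentiableAt ℝ (fun z => π z i j) x)
    (hx : π x = 0) {γ : ℝ → Fin n → ℝ} {v : Fin n → ℝ} (hγ : HasDerivAt γ v 0) (hγx : γ 0 = x) :
    Tendsto (fun t => t⁻¹ • π (γ t)) (𝓝[≠] 0) (𝓝 (linearPart π x v)) := by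
  subst hγx
  refine tendsto_pi_nhds.2 fun i => tendsto_pi_nhds.2 fun j => ?_
  simpa [linearPart, hx] using ((hπ i j).hasFDerivAt.comp_hasDerivAt 0 hγ).tendsto_slope_zero

theorem tendsto_inv_smul_Pprod (hπ : ∀ i j, DifferentiableAt ℝ (fun z => π z i j) x)
    (hx : π x = 0) {γ : ℝ → (Fin n → ℝ) × (Fin n → ℝ)} {w : (Fin n → ℝ) × (Fin n → ℝ)}
    (hγ : HasDerivAt γ w 0) (hγx : γ 0 = (x, x)) :
    Tendsto (fun t => t⁻¹ • Pprod π (γ t)) (𝓝[≠] 0) (𝓝 (Pprod (linearPart π x) w)) := by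
  have hfst := tendsto_inv_smul_comp hπ hx hγ.fst (congrArg Prod.fst hγx)
  have hsnd := tendsto_inv_smul_comp hπ hx hγ.snd (congrArg Prod.snd hγx)
  simpa only [Pprod, Matrix.fromBlocks_smul, smul_zero, smul_neg] using
    tendsto_fromBlocks hfst tendsto_const_nhds tendsto_const_nhds hsnd.neg

theorem tendsto_inv_smul_linearPart (hπ : ∀ i j, ContDiffAt ℝ 1 (fun z => π z i j) x)
    {γ : ℝ → Fin n → ℝ} (hγ : ContinuousAt γ 0) (hγx : γ 0 = x) (v : Fin n → ℝ) :
    Tendsto (fun t => t⁻¹ • linearPart π (γ t) (t • v)) (𝓝[≠] 0) (𝓝 (linearPart π x v)) := by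
  subst hγx
  have hlim : ContinuousAt (fun t => linearPart π (γ t) v) 0 := by
    refine continuousAt_pi.2 fun i => continuousAt_pi.2 fun j => ?_
    exact (((hπ i j).continuousAt_fderiv one_ne_zero).comp hγ).clm_apply continuousAt_const
  refine (hlim.tendsto.mono_left nhdsWithin_le_nhds).congr' ?_
  filter_upwards [self_mem_nhdsWithin] with t ht
  ext i j
  simp [linearPart, inv_mul_cancel_left₀ ht]

theorem pilin_eq_fromBlocks (p : (Fin n → ℝ) × (Fin n → ℝ)) :
    pilin π p = Matrix.fromBlocks 0 (π p.1) (-(π p.1)ᵀ) (linearPart π p.1 p.2) :=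
  rfl

theorem tendsto_inv_smul_pilin (hπ : ∀ i j, ContDiffAt ℝ 1 (fun z => π z i j) x) (hx : π x = 0)
    (p : (Fin n → ℝ) × (Fin n → ℝ)) :
    Tendsto (fun t : ℝ => t⁻¹ • pilin π ((x, 0) + t • p)) (𝓝[≠] 0)
      (𝓝 (Matrix.fromBlocks 0 (linearPart π x p.1) (-(linearPart π x p.1)ᵀ)
        (linearPart π x p.2))) := by
  have hline := hasDerivAt_add_smul x p.1 (0 : ℝ)
  have hbase : Tendsto (fun t : ℝ => t⁻¹ • π (x + t • p.1)) (𝓝[≠] 0)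
      (𝓝 (linearPart π x p.1)) :=
    tendsto_inv_smul_comp (fun i j => (hπ i j).differentiableAt one_ne_zero) hx hline (by simp)
  have hfibre := tendsto_inv_smul_linearPart hπ hline.continuousAt (by simp) p.2
  simpa [pilin_eq_fromBlocks, Matrix.fromBlocks_smul] using
    tendsto_fromBlocks tendsto_const_nhds hbase (tendsto_transpose hbase).neg hfibre

end LinearPart

section Jacobian

variable {n : ℕ} {φ : (Fin n → ℝ) × (Fin n → ℝ) → (Fin n → ℝ) × (Fin n → ℝ)}

theorem continuousAt_Jmat {q : (Fin n → ℝ) × (Fin n → ℝ)} (hφ : ContDiffAt ℝ 1 φ q) :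
    ContinuousAt (Jmat φ) q := by
  refine continuousAt_pi.2 fun l => continuousAt_pi.2 fun m => ?_
  have hcol : ContinuousAt (fun p => fderiv ℝ φ p (basisVec m)) q :=
    (hφ.continuousAt_fderiv one_ne_zero).clm_apply continuousAt_const
  rcases l with i | i
  · exact (continuous_apply i).continuousAt.comp hcol.fst
  · exact (continuous_apply i).continuousAt.comp hcol.snd

theorem Jmat_of_eq_diagonal {x : Fin n → ℝ} (hφ : DifferentiableAt ℝ φ (x, 0))
    (hdiag : ∀ᶠ y in 𝓝 x, φ (y, 0) = (y, y)) :
    Jmat φ (x, 0) = Matrix.fromBlocks 1 (Jmat φ (x, 0)).toBlocks₁₂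
      1 (Jmat φ (x, 0)).toBlocks₂₂ := by
  rw [Matrix.ext_iff_blocks]
  refine ⟨?_, rfl, ?_, rfl⟩ <;>
  · ext i j
    simp [Matrix.toBlocks₁₁, Matrix.toBlocks₂₁, Jmat, basisVec,
      fderiv_apply_of_eq_diagonal hφ hdiag, Matrix.one_apply, Pi.single_apply]

theorem Jmat_congruence_linearPart {π : (Fin n → ℝ) → Matrix (Fin n) (Fin n) ℝ} {x : Fin n → ℝ}
    (hπ : ∀ i j, ContDiffAt ℝ 1 (fun z => π z i j) x) (hx : π x = 0)
    (hφ : ContDiffAt ℝ 1 φ (x, 0)) (hφx : φ (x, 0) = (x, x))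
    (hJ : ∀ᶠ p in 𝓝 (x, 0), Jmat φ p * pilin π p * (Jmat φ p)ᵀ = Pprod π (φ p))
    (p : (Fin n → ℝ) × (Fin n → ℝ)) :
    Jmat φ (x, 0) * Matrix.fromBlocks 0 (linearPart π x p.1) (-(linearPart π x p.1)ᵀ)
        (linearPart π x p.2) * (Jmat φ (x, 0))ᵀ =
      Pprod (linearPart π x) (fderiv ℝ φ (x, 0) p) := by
  have hline := hasDerivAt_add_smul (x, (0 : Fin n → ℝ)) p (0 : ℝ)
  have hq : Tendsto (fun t : ℝ => (x, (0 : Fin n → ℝ)) + t • p) (𝓝[≠] 0) (𝓝 (x, 0)) := by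
    simpa using hline.continuousAt.tendsto.mono_left nhdsWithin_le_nhds
  have hJlim := (continuousAt_Jmat hφ).tendsto.comp hq
  have hleft := (hJlim.mul (tendsto_inv_smul_pilin hπ hx p)).mul (tendsto_transpose hJlim)
  have hright : Tendsto (fun t : ℝ => t⁻¹ • Pprod π (φ ((x, 0) + t • p))) (𝓝[≠] 0)
      (𝓝 (Pprod (linearPart π x) (fderiv ℝ φ (x, 0) p))) :=
    tendsto_inv_smul_Pprod (fun i j => (hπ i j).differentiableAt one_ne_zero) hx
      ((hφ.differentiableAt one_ne_zero).hasFDerivAt.comp_hasDerivAt_of_eq 0 hline (by simp))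
      (by simpa using hφx)
  refine tendsto_nhds_unique (hleft.congr' ?_) hright
  filter_upwards [hq.eventually hJ] with t ht
  simp [← ht]

end Jacobian

namespace IsLinearizableAroundDiagonal

variable {n : ℕ}

theorem linearPart_eq_zero {π : (Fin n → ℝ) → Matrix (Fin n) (Fin n) ℝ}
    (h : IsLinearizableAroundDiagonal π) {x : Fin n → ℝ}
    (hπ : ∀ i j, ContDiffAt ℝ 1 (fun z => π z i j) x) (hx : π x = 0) (v : Fin n → ℝ) :
    linearPart π x v = 0 := by
  obtain ⟨W₁, -, hW₁, -, hmem, φ, -, hφ, -, -, -, -, hdiag, hJ⟩ := h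
  have hφ₁ : ContDiffAt ℝ 1 φ (x, 0) := hφ.contDiffAt.of_le (mod_cast le_top)
  have hφ' : DifferentiableAt ℝ φ (x, 0) := hφ₁.differentiableAt one_ne_zero
  have hdiag' : ∀ᶠ y in 𝓝 x, φ (y, 0) = (y, y) := .of_forall hdiag
  have hcongr := Jmat_congruence_linearPart hπ hx hφ₁ (hdiag x)
    (eventually_of_mem (hW₁.mem_nhds (hmem x)) hJ)
  have hbase := hcongr (v, 0)
  have hfibre := hcongr (0, v)
  rw [fderiv_apply_of_eq_diagonal hφ' hdiag'] at hbase
  rw [Jmat_of_eq_diagonal hφ' hdiag'] at hbase hfibre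
  simp only [linearPart_zero_right, Matrix.transpose_zero, neg_zero] at hbase hfibre
  exact eq_zero_of_fromBlocks_congruence hbase hfibre

protected theorem zero :
    IsLinearizableAroundDiagonal (0 : (Fin n → ℝ) → Matrix (Fin n) (Fin n) ℝ) := by
  refine ⟨Set.univ, Set.univ, isOpen_univ, isOpen_univ, fun _ => trivial,
    fun p => (p.1, p.1 + p.2), fun p => (p.1, p.2 - p.1), by fun_prop, by fun_prop,
    fun p _ => by simp, fun p _ => by simp, ?_, fun x => by simp, fun p _ => ?_⟩
  · exact Set.image_univ_of_surjective fun p => ⟨(p.1, p.2 - p.1), by simp⟩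
  · have hpilin : pilin (0 : (Fin n → ℝ) → Matrix (Fin n) (Fin n) ℝ) p = 0 := by
      ext (i | i) (j | j) <;> simp [pilin]
    simp [hpilin, Pprod]

end IsLinearizableAroundDiagonal

section LiePoisson

variable {n : ℕ} {c : Fin n → Fin n → Fin n → ℝ}

theorem liePoisson_zero_right : liePoisson c 0 = 0 := by
  ext i j
  simp [liePoisson]

theorem liePoisson_eq_zero_iff : liePoisson c = 0 ↔ ∀ i j k, c i j k = 0 := by
  refine ⟨fun h i j k => ?_, fun h => ?_⟩
  · simpa [liePoisson, Pi.single_apply] using congrFun₂ (congrFun h (Pi.single k 1)) i j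
  · ext x i j
    simp [liePoisson, h]

theorem contDiff_liePoisson {m : WithTop ℕ∞} (i j : Fin n) :
    ContDiff ℝ m fun x => liePoisson c x i j := by
  simp only [liePoisson, Matrix.of_apply]
  fun_prop

theorem linearPart_liePoisson (x : Fin n → ℝ) : linearPart (liePoisson c) x = liePoisson c := by
  ext v i j
  let L : (Fin n → ℝ) →L[ℝ] ℝ := ∑ k, c i j k • ContinuousLinearMap.proj k
  have hL : (fun z => liePoisson c z i j) = L := by
    ext z
    simp [L, liePoisson]
  calc fderiv ℝ (fun z => liePoisson c z i j) x v = L v := by rw [hL, L.fderiv]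
    _ = liePoisson c v i j := (congrFun hL v).symm

end LiePoisson

theorem stmt12_general {n : ℕ} (c : Fin n → Fin n → Fin n → ℝ) :
    IsLinearizableAroundDiagonal (liePoisson c) ↔ ∀ i j k, c i j k = 0 := by
  rw [← liePoisson_eq_zero_iff]
  refine ⟨fun h => ?_, fun h => h ▸ .zero⟩
  rw [← linearPart_liePoisson 0]
  exact funext <| h.linearPart_eq_zero (fun i j => (contDiff_liePoisson i j).contDiffAt)
    liePoisson_zero_right

theorem stmt12 {n : ℕ} (c : Fin n → Fin n → Fin n → ℝ)
    (hskew : ∀ i j k, c i j k = -(c j i k))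
    (hjacobi : ∀ i j k l,
      ∑ m, (c i j m * c m k l + c j k m * c m i l + c k i m * c m j l) = 0) :
    (∃ W₁ W₂ : Set ((Fin n → ℝ) × (Fin n → ℝ)),
      IsOpen W₁ ∧ IsOpen W₂ ∧ (∀ x : Fin n → ℝ, (x, (0 : Fin n → ℝ)) ∈ W₁) ∧
      ∃ φ ψ : (Fin n → ℝ) × (Fin n → ℝ) → (Fin n → ℝ) × (Fin n → ℝ),
        ContDiff ℝ (⊤ : ℕ∞) φ ∧ ContDiff ℝ (⊤ : ℕ∞) ψ ∧
        (∀ p ∈ W₁, ψ (φ p) = p) ∧ (∀ p ∈ W₂, φ (ψ p) = p) ∧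
        φ '' W₁ = W₂ ∧ (∀ x : Fin n → ℝ, φ (x, 0) = (x, x)) ∧
        (∀ p ∈ W₁, Jmat φ p * pilin (liePoisson c) p * (Jmat φ p)ᵀ
          = Pprod (liePoisson c) (φ p))) ↔
    (∀ i j k, c i j k = 0) :=
  stmt12_general c
end
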